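/- Let H : Matrix (Fin m) (Fin n) (ZMod 2) with H * Hᵀ = 0, and let d ≥ 1 be such that every nonzero a : Fin n → ZMod 2 with #{i : a i ≠ 0} < d satisfies H.mulVec a ≠ 0 (H is the parity check matrix of a dual-containing binary code of distance d). Consider the 2m vectors w_j := (H j, 0) and w'_j := (0, H j) in V = (Fin n → ZMod 2) × (Fin n → ZMod 2), i.e. the rows of the CSS matrix diag(H, H). Then: (1) any two of these 2m vectors have symplectic product 0 (the CSS matrix is self-orthogonal under the symplectic product); and (2) for every nonzero (z,x) ∈ V with #{i : z i ≠ 0 ∨ x i ≠ 0} < d, at least one of the 2m vectors has nonzero symplectic product with (z,x). Hence diag(H,H) defines a dual-containing [n, 2k−n] symplectic code of distance d. -/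

import Mathlib

/-! The symplectic products of `(z, x)` with the rows `(HX j, 0)` and `(0, HZ k)` of
`diag(HX, HZ)` are, up to sign, the entries of the syndromes `HX x` and `HZ z`. Rows of different
blocks are thus orthogonal because `HX HZᵀ = 0`. A pair `(z, x)` orthogonal to all rows satisfies
`HX x = 0` and `HZ z = 0`; the supports of `z` and `x` lie in the symplectic support of `(z, x)`,
so if the latter has fewer than `d` elements, both words vanish. -/

open Matrix

/-- The phase space `(ℤ₂)ⁿ × (ℤ₂)ⁿ` of `n`-qubit Pauli labels. -/
abbrev V (n : ℕ) : Type := (Fin n → ZMod 2) × (Fin n → ZMod 2)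

/-- The symplectic product `⟨(z,x),(z',x')⟩ = ∑ i, (z i * x' i + z' i * x i)`. -/
def sp {n : ℕ} (u v : V n) : ZMod 2 :=
  ∑ i, (u.1 i * v.2 i + v.1 i * u.2 i)

section SymplecticForm

variable {R σ : Type*} [CommRing R] [Fintype σ]

/-- The standard symplectic form on `R^σ × R^σ`. The minus sign makes it alternating over every
commutative ring; over `ZMod 2` it is `sp`. -/
def symplecticForm (u v : (σ → R) × (σ → R)) : R :=
  u.1 ⬝ᵥ v.2 - v.1 ⬝ᵥ u.2

lemma symplecticForm_inl (a : σ → R) (v : (σ → R) × (σ → R)) :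
    symplecticForm (a, 0) v = a ⬝ᵥ v.2 := by
  simp [symplecticForm]

lemma symplecticForm_inr (a : σ → R) (v : (σ → R) × (σ → R)) :
    symplecticForm (0, a) v = -(a ⬝ᵥ v.1) := by
  simp [symplecticForm, dotProduct_comm]

end SymplecticForm

lemma sp_eq_symplecticForm {n : ℕ} (u v : V n) : sp u v = symplecticForm u v := by
  simp only [sp, symplecticForm, dotProduct, CharTwo.sub_eq_add, Finset.sum_add_distrib]

section CSS

variable {R ι κ σ : Type*} [CommRing R] [Fintype σ]

lemma forall_symplecticForm_inl_row_eq_zero_iff (H : Matrix ι σ R) (v : (σ → R) × (σ → R)) :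
    (∀ j, symplecticForm (H j, 0) v = 0) ↔ H *ᵥ v.2 = 0 := by
  simp only [symplecticForm_inl, funext_iff, mulVec, Pi.zero_apply]

lemma forall_symplecticForm_inr_row_eq_zero_iff (H : Matrix κ σ R) (v : (σ → R) × (σ → R)) :
    (∀ k, symplecticForm (0, H k) v = 0) ↔ H *ᵥ v.1 = 0 := by
  simp only [symplecticForm_inr, neg_eq_zero, funext_iff, mulVec, Pi.zero_apply]

lemma symplecticForm_inl_row_inr_row_eq_zero {HX : Matrix ι σ R} {HZ : Matrix κ σ R}
    (hdual : HX * HZᵀ = 0) (j : ι) (k : κ) : symplecticForm (HX j, 0) (0, HZ k) = 0 :=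
  (symplecticForm_inl _ _).trans (congrFun (congrFun hdual j) k)

lemma exists_symplecticForm_row_ne_zero {HX : Matrix ι σ R} {HZ : Matrix κ σ R} {d : ℕ}
    (hdistX : ∀ a : σ → R, a ≠ 0 → ({i | a i ≠ 0} : Set σ).ncard < d → HX *ᵥ a ≠ 0)
    (hdistZ : ∀ a : σ → R, a ≠ 0 → ({i | a i ≠ 0} : Set σ).ncard < d → HZ *ᵥ a ≠ 0)
    {z x : σ → R} (hne : (z, x) ≠ (0, 0))
    (hweight : ({i | z i ≠ 0 ∨ x i ≠ 0} : Set σ).ncard < d) :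
    (∃ j, symplecticForm (HX j, 0) (z, x) ≠ 0) ∨
      ∃ k, symplecticForm (0, HZ k) (z, x) ≠ 0 := by
  have hweight_z : ({i | z i ≠ 0} : Set σ).ncard < d :=
    (Set.ncard_le_ncard fun _ => Or.inl).trans_lt hweight
  have hweight_x : ({i | x i ≠ 0} : Set σ).ncard < d :=
    (Set.ncard_le_ncard fun _ => Or.inr).trans_lt hweight
  by_contra! ⟨horthX, horthZ⟩
  have hx : x = 0 := by
    by_contra hx
    exact hdistX x hx hweight_x ((forall_symplecticForm_inl_row_eq_zero_iff HX (z, x)).1 horthX)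
  have hz : z = 0 := by
    by_contra hz
    exact hdistZ z hz hweight_z ((forall_symplecticForm_inr_row_eq_zero_iff HZ (z, x)).1 horthZ)
  exact hne (Prod.ext hz hx)

theorem css_construction_general (d : ℕ) (HX : Matrix ι σ R) (HZ : Matrix κ σ R)
    (hdual : HX * HZᵀ = 0)
    (hdistX : ∀ a : σ → R, a ≠ 0 → ({i | a i ≠ 0} : Set σ).ncard < d → HX *ᵥ a ≠ 0)
    (hdistZ : ∀ a : σ → R, a ≠ 0 → ({i | a i ≠ 0} : Set σ).ncard < d → HZ *ᵥ a ≠ 0) :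
    ((∀ j j', symplecticForm (HX j, 0) (HX j', 0) = 0) ∧
      (∀ j k, symplecticForm (HX j, 0) (0, HZ k) = 0) ∧
      (∀ k k', symplecticForm (0, HZ k) (0, HZ k') = 0)) ∧
    (∀ z x : σ → R, (z, x) ≠ (0, 0) →
      ({i | z i ≠ 0 ∨ x i ≠ 0} : Set σ).ncard < d →
      (∃ j, symplecticForm (HX j, 0) (z, x) ≠ 0) ∨
        ∃ k, symplecticForm (0, HZ k) (z, x) ≠ 0) := by
  refine ⟨⟨fun j j' => ?_, symplecticForm_inl_row_inr_row_eq_zero hdual, fun k k' => ?_⟩,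
    fun z x => exists_symplecticForm_row_ne_zero hdistX hdistZ⟩
  · rw [symplecticForm_inl, dotProduct_zero]
  · rw [symplecticForm_inr, dotProduct_zero, neg_zero]

end CSS

/-- The CSS construction: if `H` is the parity check matrix of a dual-containing binary
code (`H Hᵀ = 0`) of distance `d`, then the rows `(H j, 0)` and `(0, H j)` of
`diag(H,H)` are (1) pairwise orthogonal for the symplectic product, and (2) detect
every nonzero pair `(z,x)` of symplectic weight less than `d`; hence `diag(H,H)`
defines a dual-containing symplectic code of distance `d`. -/
theorem css_construction (m n d : ℕ) (hd : 1 ≤ d)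
    (H : Matrix (Fin m) (Fin n) (ZMod 2))
    (hdual : H * Hᵀ = 0)
    (hdist : ∀ a : Fin n → ZMod 2, a ≠ 0 →
      ({i | a i ≠ 0} : Set (Fin n)).ncard < d → H.mulVec a ≠ 0) :
    (∀ j j' : Fin m,
      sp ((H j, 0) : V n) ((H j', 0) : V n) = 0 ∧
      sp ((H j, 0) : V n) (((0 : Fin n → ZMod 2), H j') : V n) = 0 ∧
      sp (((0 : Fin n → ZMod 2), H j) : V n) (((0 : Fin n → ZMod 2), H j') : V n) = 0) ∧
    (∀ z x : Fin n → ZMod 2, (z, x) ≠ (0, 0) →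
      ({i | z i ≠ 0 ∨ x i ≠ 0} : Set (Fin n)).ncard < d →
      ∃ j : Fin m,
        sp ((H j, 0) : V n) (z, x) ≠ 0 ∨
        sp (((0 : Fin n → ZMod 2), H j) : V n) (z, x) ≠ 0) := by
  obtain ⟨⟨hXX, hXZ, hZZ⟩, hdetect⟩ := css_construction_general d H H hdual hdist hdist
  simp only [sp_eq_symplecticForm, exists_or]
  exact ⟨fun j j' => ⟨hXX j j', hXZ j j', hZZ j j'⟩, hdetect⟩
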